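/- Let ℓ be a prime and let α = p/q with p, q positive coprime integers. If the Ruban continued fraction expansion of α terminates, having exactly k partial quotients a_0, …, a_{k−1}, then k ≤ log(min(p, q))/log ℓ + 2 ≤ h(α)/log ℓ + 2, where h(α) = log max(p, q). -/

import Mathlib

open Filter Topology
open scoped Classical

/-- `a` is the `ℓ`-adic integral part of the rational number `α`. -/
def IsRubanFloorQ (p : ℕ) (α a : ℚ) : Prop :=
  (∃ (m : ℤ) (k : ℕ), a = (m : ℚ) / (p : ℚ) ^ k) ∧ 0 ≤ a ∧ a < (p : ℚ) ∧
    padicNorm p (α - a) < 1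

noncomputable def rubanFloorQ (p : ℕ) (α : ℚ) : ℚ :=
  if h : ∃ a : ℚ, IsRubanFloorQ p α a then h.choose else 0

/-- Complete quotients of the Ruban continued fraction expansion of a rational number. -/
noncomputable def rubanCQQ (p : ℕ) (α : ℚ) : ℕ → ℚ
  | 0 => α
  | n + 1 => (rubanCQQ p α n - rubanFloorQ p (rubanCQQ p α n))⁻¹

/-- Partial quotients of the Ruban continued fraction expansion of a rational number. -/
noncomputable def rubanPQQ (p : ℕ) (α : ℚ) (n : ℕ) : ℚ :=
  rubanFloorQ p (rubanCQQ p α n)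

/-- The Ruban continued fraction expansion of `α` terminates. -/
def RubanTerminatesQ (p : ℕ) (α : ℚ) : Prop :=
  ∃ n, rubanCQQ p α n = rubanPQQ p α n


lemma ruban_floor_nonneg (p : ℕ) (α : ℚ) : 0 ≤ rubanFloorQ p α := by
  unfold rubanFloorQ
  split_ifs with h
  · exact h.choose_spec.2.1
  · exact le_rfl

lemma ruban_CQQ_shift (p : ℕ) (α : ℚ) (n : ℕ) :
    rubanCQQ p α (n + 1) = rubanCQQ p ((α - rubanFloorQ p α)⁻¹) n := by
  induction n with
  | zero => rfl
  | succ n ih => rw [rubanCQQ, ih, rubanCQQ]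

lemma ruban_nonneg (p : ℕ) (m : ℕ) : ∀ α : ℚ, rubanCQQ p α m = rubanPQQ p α m → 0 ≤ α := by
  induction m with
  | zero =>
    intro α h
    have : α = rubanFloorQ p α := h
    rw [this]
    exact ruban_floor_nonneg p α
  | succ m ih =>
    intro α h
    unfold rubanPQQ at h
    rw [ruban_CQQ_shift] at h
    have h1 := ih _ h
    have h2 := inv_nonneg.mp h1
    have := ruban_floor_nonneg p α
    linarith

lemma ruban_floor_spec (l : ℕ) [hl : Fact l.Prime] (N D f : ℕ) (hD : 0 < D) (hlD : ¬ l ∣ D) :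
    IsRubanFloorQ l ((N : ℚ) / ((l : ℚ) ^ f * D)) (rubanFloorQ l ((N : ℚ) / ((l : ℚ) ^ f * D))) := by
  have hl0 : 0 < l := hl.out.pos
  have hex : ∃ a : ℚ, IsRubanFloorQ l ((N : ℚ) / ((l : ℚ) ^ f * D)) a := by
    have hcop : IsCoprime (D : ℤ) ((l : ℤ) ^ (f + 1)) := by
      apply IsCoprime.pow_right
      rw [Nat.isCoprime_iff_coprime]
      exact ((Nat.Prime.coprime_iff_not_dvd hl.out).2 hlD).symm
    obtain ⟨u, v, huv⟩ := hcop
    set M : ℤ := (l : ℤ) ^ (f + 1) with hM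
    have hMpos : 0 < M := by positivity
    set A : ℤ := (N * u) % M with hA
    have hA0 : 0 ≤ A := Int.emod_nonneg _ hMpos.ne'
    have hA1 : A < M := Int.emod_lt_of_pos _ hMpos
    have hA2 := Int.emod_add_mul_ediv (N * u) M
    rw [← hA] at hA2
    refine ⟨(A : ℚ) / (l : ℚ) ^ f, ⟨A, f, rfl⟩, by positivity, ?_, ?_⟩
    · rw [div_lt_iff₀ (by positivity)]
      have : (A : ℚ) < (M : ℚ) := by exact_mod_cast hA1
      rw [hM] at this
      push_cast at this
      rw [pow_succ] at this
      linarith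
    · have hint : ∃ t : ℤ, (N : ℤ) - A * D = M * t := by
        refine ⟨N * v + (N * u) / M * D, ?_⟩
        linear_combination (-(N : ℤ)) * huv - (D : ℤ) * hA2
      obtain ⟨t, ht⟩ := hint
      have ht' : (N : ℚ) - A * D = (l : ℚ) ^ (f + 1) * t := by
        have : (((N : ℤ) - A * D : ℤ) : ℚ) = ((M * t : ℤ) : ℚ) := by rw [ht]
        rw [hM] at this
        push_cast at this
        exact this
      have hDq : (D : ℚ) ≠ 0 := by positivity
      have hlq : (l : ℚ) ≠ 0 := by positivity
      have : (N : ℚ) / ((l : ℚ) ^ f * D) - (A : ℚ) / (l : ℚ) ^ f = ((l * t : ℤ) : ℚ) / (D : ℚ) := by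
        rw [show (N : ℚ) = A * D + (l : ℚ) ^ (f + 1) * t by linarith]
        push_cast
        field_simp
        ring
      rw [this, padicNorm.div, (padicNorm.nat_eq_one_iff D).2 hlD, div_one]
      rw [padicNorm.int_lt_one_iff]
      exact Dvd.intro _ rfl
  unfold rubanFloorQ
  rw [dif_pos hex]
  exact hex.choose_spec

lemma ruban_step (l : ℕ) [hl : Fact l.Prime] (N D f : ℕ) (hD : 0 < D) (hlD : ¬ l ∣ D) (a : ℚ)
    (ha : IsRubanFloorQ l ((N : ℚ) / ((l : ℚ) ^ f * D)) a)
    (hpos : 0 < (N : ℚ) / ((l : ℚ) ^ f * D) - a) :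
    ∃ D' g : ℕ, 0 < D' ∧ ¬ l ∣ D' ∧ 1 ≤ g ∧ l ^ (f + 1) * D' ≤ N ∧
      ((N : ℚ) / ((l : ℚ) ^ f * D) - a)⁻¹ = (D : ℚ) / ((l : ℚ) ^ g * D') := by
  obtain ⟨⟨m, k, rfl⟩, h0, -, hn⟩ := ha
  have hl0 : 0 < l := hl.out.pos
  have hDq : (D : ℚ) ≠ 0 := by positivity
  have hlq : (l : ℚ) ≠ 0 := by positivity
  set β : ℚ := (N : ℚ) / ((l : ℚ) ^ f * D) - (m : ℚ) / (l : ℚ) ^ k with hβ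
  have hz : (((N : ℤ) * l ^ k - m * D * l ^ f : ℤ) : ℚ) = (l : ℚ) ^ (f + k) * (β * D) := by
    rw [hβ]
    push_cast
    field_simp
    ring
  have hβD : padicNorm l (β * D) < 1 := by
    rw [padicNorm.mul, (padicNorm.nat_eq_one_iff D).2 hlD, mul_one]
    exact hn
  have hdvd : ((l ^ (f + k) : ℕ) : ℤ) ∣ (N : ℤ) * l ^ k - m * D * l ^ f := by
    rw [padicNorm.dvd_iff_norm_le, hz, padicNorm.mul]
    have hpw : padicNorm l ((l : ℚ) ^ (f + k)) = (l : ℚ) ^ (-((f + k : ℕ) : ℤ)) := by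
      rw [padicNorm.eq_zpow_of_nonzero (by positivity), padicValRat.pow,
        padicValRat.self hl.out.one_lt, mul_one]
    rw [hpw]
    have : (0 : ℚ) < (l : ℚ) ^ (-((f + k : ℕ) : ℤ)) := by positivity
    nlinarith
  obtain ⟨s, hs⟩ := hdvd
  have hsβ : (s : ℚ) = β * D := by
    rw [hs] at hz
    push_cast at hz
    exact mul_left_cancel₀ (by positivity) hz
  rw [← hsβ, padicNorm.int_lt_one_iff] at hβD
  obtain ⟨t, rfl⟩ := hβD
  have ht : 0 < t := by
    have h1 : 0 < β * D := by positivity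
    rw [← hsβ] at h1
    have h2 : 0 < (l : ℤ) * t := by exact_mod_cast h1
    exact pos_of_mul_pos_right h2 (by positivity)
  have hle : (l : ℤ) ^ (f + 1) * t ≤ N := by
    have h1 : (N : ℚ) / ((l : ℚ) ^ f * D) ≥ β := by rw [hβ]; linarith
    have h2 : β = (l * t : ℚ) / D := by
      rw [eq_div_iff hDq, ← hsβ]; push_cast; ring
    rw [h2, ge_iff_le, div_le_div_iff₀ (by positivity) (by positivity)] at h1
    have h3 : ((l : ℚ) ^ (f + 1) * t) * D ≤ N * D := by
      calc _ = (l * t : ℚ) * ((l : ℚ) ^ f * D) := by ring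
        _ ≤ _ := h1
    have h4 := le_of_mul_le_mul_right h3 (by positivity)
    exact_mod_cast h4
  lift t to ℕ using ht.le
  have ht' : t ≠ 0 := by
    rintro rfl
    simp at ht
  obtain ⟨e, D', hD', rfl⟩ := Nat.exists_eq_pow_mul_and_not_dvd ht' l hl.out.ne_one
  have hD'0 : 0 < D' := Nat.pos_of_ne_zero (by rintro rfl; simp at hD')
  refine ⟨D', e + 1, hD'0, hD', by omega, ?_, ?_⟩
  · have h5 : l ^ (f + 1) * (l ^ e * D') ≤ N := by exact_mod_cast hle
    refine le_trans ?_ h5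
    exact Nat.mul_le_mul_left _ (Nat.le_mul_of_pos_left _ (by positivity))
  · have h2 : β = ((l : ℚ) ^ (e + 1) * D') / D := by
      rw [eq_div_iff hDq, ← hsβ]; push_cast; ring
    rw [h2, inv_div]

lemma ruban_step' (l : ℕ) [hl : Fact l.Prime] (N D f : ℕ) (hD : 0 < D) (hlD : ¬ l ∣ D) (m : ℕ)
    (hterm : rubanCQQ l ((N : ℚ) / ((l : ℚ) ^ f * D)) (m + 1)
      = rubanPQQ l ((N : ℚ) / ((l : ℚ) ^ f * D)) (m + 1))
    (hmin : ∀ i, i < m + 1 → rubanCQQ l ((N : ℚ) / ((l : ℚ) ^ f * D)) i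
      ≠ rubanPQQ l ((N : ℚ) / ((l : ℚ) ^ f * D)) i) :
    ∃ D' g : ℕ, 0 < D' ∧ ¬ l ∣ D' ∧ 1 ≤ g ∧ l ^ (f + 1) * D' ≤ N ∧
      rubanCQQ l ((D : ℚ) / ((l : ℚ) ^ g * D')) m = rubanPQQ l ((D : ℚ) / ((l : ℚ) ^ g * D')) m ∧
      ∀ i, i < m → rubanCQQ l ((D : ℚ) / ((l : ℚ) ^ g * D')) i
        ≠ rubanPQQ l ((D : ℚ) / ((l : ℚ) ^ g * D')) i := by
  have hspec := ruban_floor_spec l N D f hD hlD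
  unfold rubanPQQ at *
  have h0 := hmin 0 (by omega)
  rw [ruban_CQQ_shift] at hterm
  have hnn := inv_nonneg.mp (ruban_nonneg l m _ hterm)
  have hpos := lt_of_le_of_ne hnn (Ne.symm (sub_ne_zero.mpr h0))
  obtain ⟨D', g, h1, h2, h3, h4, h5⟩ := ruban_step l N D f hD hlD _ hspec hpos
  refine ⟨D', g, h1, h2, h3, h4, ?_, ?_⟩
  · rw [← h5]; exact hterm
  · intro i hi
    have := hmin (i + 1) (by omega)
    rw [ruban_CQQ_shift, h5] at this
    exact this

lemma ruban_bound (l : ℕ) [hl : Fact l.Prime] (m : ℕ) : ∀ (N D f : ℕ), 0 < N → 0 < D → ¬ l ∣ D →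
    1 ≤ f →
    rubanCQQ l ((N : ℚ) / ((l : ℚ) ^ f * D)) m = rubanPQQ l ((N : ℚ) / ((l : ℚ) ^ f * D)) m →
    (∀ i, i < m → rubanCQQ l ((N : ℚ) / ((l : ℚ) ^ f * D)) i
      ≠ rubanPQQ l ((N : ℚ) / ((l : ℚ) ^ f * D)) i) →
    l ^ (2 * (m / 2)) ≤ D ∧ l ^ (2 * ((m + 1) / 2)) ≤ N := by
  have hl0 : 0 < l := hl.out.pos
  induction m with
  | zero =>
    intro N D f hN hD _ _ _ _
    simp
    omega
  | succ m ih =>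
    intro N D f hN hD hlD hf hterm hmin
    obtain ⟨D', g, h1, h2, h3, h4, h5, h6⟩ := ruban_step' l N D f hD hlD m hterm hmin
    obtain ⟨h7, h8⟩ := ih D D' g hD h1 h2 h3 h5 h6
    refine ⟨h8, ?_⟩
    have e : 2 * ((m + 1 + 1) / 2) = 2 + 2 * (m / 2) := by omega
    rw [e, pow_add]
    refine le_trans ?_ h4
    exact Nat.mul_le_mul (Nat.pow_le_pow_right hl0 (by omega)) h7

lemma ruban_nat_bound (l : ℕ) [hl : Fact l.Prime] (p q : ℕ) (hp : 0 < p) (hq : 0 < q) (n : ℕ)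
    (hterm : rubanCQQ l ((p : ℚ) / (q : ℚ)) n = rubanPQQ l ((p : ℚ) / (q : ℚ)) n)
    (hmin : ∀ m, m < n → rubanCQQ l ((p : ℚ) / (q : ℚ)) m ≠ rubanPQQ l ((p : ℚ) / (q : ℚ)) m) :
    l ^ (n - 1) ≤ p ∧ l ^ (n - 1) ≤ q := by
  have hl0 : 0 < l := hl.out.pos
  have mono : ∀ {a b : ℕ}, a ≤ b → l ^ a ≤ l ^ b := fun h => Nat.pow_le_pow_right hl0 h
  obtain ⟨f, D, hD, rfl⟩ := Nat.exists_eq_pow_mul_and_not_dvd hq.ne' l hl.out.ne_one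
  have hD0 : 0 < D := Nat.pos_of_ne_zero (by rintro rfl; simp at hD)
  rw [Nat.cast_mul, Nat.cast_pow] at hterm hmin
  rcases Nat.eq_zero_or_pos f with rfl | hf
  · cases n with
    | zero => simp; omega
    | succ n =>
      obtain ⟨D', g, h1, h2, h3, h4, h5, h6⟩ := ruban_step' l p D 0 hD0 hD n hterm hmin
      obtain ⟨h7, h8⟩ := ruban_bound l n D D' g hD0 h1 h2 h3 h5 h6
      constructor
      · refine le_trans ?_ h4
        refine le_trans ?_ (Nat.mul_le_mul_left _ h7)
        rw [← pow_add]
        exact mono (by omega)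
      · rw [pow_zero, one_mul]
        exact le_trans (mono (by omega)) h8
  · obtain ⟨h7, h8⟩ := ruban_bound l n p D f hp hD0 hD hf hterm hmin
    exact ⟨le_trans (mono (by omega)) h8, le_trans (le_trans (mono (by omega)) h7)
      (Nat.le_mul_of_pos_left _ (by positivity))⟩

/-- If `α = p/q` (with `p, q` positive coprime integers) has a terminating
Ruban continued fraction expansion with exactly `k` partial quotients, then
`k ≤ log(min(p,q))/log ℓ + 2 ≤ h(α)/log ℓ + 2` with `h(α) = log (max p q)`. -/
theorem ruban_rational_finite_expansion_length_bound
    (ℓ : ℕ) (hℓ : ℓ.Prime) (p q : ℕ) (hp : 0 < p) (hq : 0 < q) (hpq : Nat.Coprime p q)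
    (k : ℕ) (hk : 1 ≤ k)
    (hterm : rubanCQQ ℓ ((p : ℚ) / (q : ℚ)) (k - 1) = rubanPQQ ℓ ((p : ℚ) / (q : ℚ)) (k - 1))
    (hmin : ∀ m, m < k - 1 →
      rubanCQQ ℓ ((p : ℚ) / (q : ℚ)) m ≠ rubanPQQ ℓ ((p : ℚ) / (q : ℚ)) m) :
    (k : ℝ) ≤ Real.log (min p q) / Real.log ℓ + 2 ∧
      Real.log (min p q) / Real.log ℓ + 2 ≤ Real.log (max p q) / Real.log ℓ + 2 := by
  have : Fact ℓ.Prime := ⟨hℓ⟩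
  obtain ⟨h1, h2⟩ := ruban_nat_bound ℓ p q hp hq (k - 1) hterm hmin
  have hlog : 0 < Real.log ℓ := Real.log_pos (by exact_mod_cast hℓ.one_lt)
  have hp' : (0 : ℝ) < p := by exact_mod_cast hp
  have hq' : (0 : ℝ) < q := by exact_mod_cast hq
  have hmn : (0 : ℝ) < min (p : ℝ) q := lt_min hp' hq'
  constructor
  · have h3 : (ℓ : ℝ) ^ (k - 1 - 1) ≤ min (p : ℝ) q :=
      le_min (by exact_mod_cast h1) (by exact_mod_cast h2)
    have hl0 : (0 : ℝ) < ℓ := by exact_mod_cast hℓ.pos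
    have h4 := Real.log_le_log (by positivity) h3
    rw [Real.log_pow] at h4
    have h5 := (le_div_iff₀ hlog).2 h4
    have h6 : (k : ℝ) ≤ ((k - 1 - 1 : ℕ) : ℝ) + 2 := by
      have : k ≤ (k - 1 - 1) + 2 := by omega
      exact_mod_cast this
    linarith
  · have h3 := Real.log_le_log hmn (min_le_max : min (p : ℝ) q ≤ max (p : ℝ) q)
    gcongr
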